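/- arXiv:2508.09082 — 2 statements merged into one kernel-verified Lean document; each statement's English description precedes it below -/
import Mathlib

section
/- Let n ≥ 1, let f(x) ∈ 𝔽₂[x] divide xⁿ−1 with deg f ≥ 1, and let p(x) ∈ 𝔽₂[x] satisfy gcd(p(x), xⁿ−1) = 1, with inverse p⁻¹ in R = 𝔽₂[x]/(xⁿ−1). Let h(x) = (xⁿ−1)/f(x) and suppose r, s ∈ 𝔽₂[x] satisfy r + p·s ≡ h (mod xⁿ−1), where s is not of the form t·f in R for any t ∈ R. Then, with a = f and b = p·f (images in R): (1, p) ∈ C₁(a,b) \ C₂(a,b) with weight wt(p)+1; (p⁻¹, 1) ∈ C₁(a,b) \ C₂(a,b) with weight wt(p⁻¹)+1; and (s, r) ∈ C₁(a,b) \ C₂(a,b) with weight wt(s)+wt(r). Consequently d_GB(a,b) ≤ min{wt(p)+1, wt(p⁻¹)+1, wt(s)+wt(r)}. -/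
open Polynomial

noncomputable section

/-- `R2 n` is the ring `𝔽₂[x]/(xⁿ − 1)`. -/
abbrev R2 (n : ℕ) : Type := AdjoinRoot (X ^ n - 1 : (ZMod 2)[X])

/-- The image of `x` in `𝔽₂[x]/(xⁿ − 1)`. -/
def xR (n : ℕ) : R2 n := AdjoinRoot.root _

/-- The quotient map `𝔽₂[x] → 𝔽₂[x]/(xⁿ − 1)`. -/
def mkR (n : ℕ) : (ZMod 2)[X] →+* R2 n := AdjoinRoot.mk _

lemma xR_pow_n (n : ℕ) : xR n ^ n = 1 := by
  have h : (AdjoinRoot.mk (X ^ n - 1 : (ZMod 2)[X])) (X ^ n - 1) = 0 := AdjoinRoot.mk_self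
  rw [map_sub, map_pow, AdjoinRoot.mk_X, map_one, sub_eq_zero] at h
  exact h

/-- The unique representative of degree `< n` of an element of `𝔽₂[x]/(xⁿ − 1)` (junk if `n = 0`). -/
def repP {n : ℕ} (u : R2 n) : (ZMod 2)[X] :=
  if h : n = 0 then 0
  else AdjoinRoot.modByMonicHom (by simpa using monic_X_pow_sub_C (1 : ZMod 2) h) u

/-- The Hamming weight of an element of `𝔽₂[x]/(xⁿ − 1)`: the number of nonzero coefficients
of its degree-`< n` representative. -/
def wt {n : ℕ} (u : R2 n) : ℕ := (repP u).support.card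

/-- Coefficient of the degree-`< n` representative, indexed by `ℤ/n`. -/
def coeffZ {n : ℕ} (u : R2 n) (i : ZMod n) : ZMod 2 := (repP u).coeff i.val

/-- The X-stabilizer space `C₂(a,b) = {(r·a, r·b) : r ∈ R}` of the GB code of `(a,b)`. -/
def C2set (n : ℕ) (a b : R2 n) : Set (R2 n × R2 n) := {p | ∃ r : R2 n, p = (r * a, r * b)}

/-- The space `C₁(a,b) = {(u,v) : u·b + v·a = 0}` of the GB code of `(a,b)`. -/
def C1set (n : ℕ) (a b : R2 n) : Set (R2 n × R2 n) := {p | p.1 * b + p.2 * a = 0}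

/-- The (X-side) minimum distance of the GB code of `(a,b)`. -/
def dGB (n : ℕ) (a b : R2 n) : ℕ :=
  sInf {k | ∃ p ∈ C1set n a b \ C2set n a b, wt p.1 + wt p.2 = k}

/-- `P_m(x) = 1 + x + ⋯ + x^{m−1}` as a polynomial over `𝔽₂`. -/
def PmP (m : ℕ) : (ZMod 2)[X] := ∑ i ∈ Finset.range m, X ^ i

/-- `P_m(x) = 1 + x + ⋯ + x^{m−1}` as an element of `𝔽₂[x]/(xⁿ − 1)`. -/
def PmR (n m : ℕ) : R2 n := ∑ i ∈ Finset.range m, xR n ^ i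

/-- The ring endomorphism of `𝔽₂[x]/(xⁿ − 1)` induced by `x ↦ x^d`. -/
def substHom (n d : ℕ) : R2 n →+* R2 n :=
  AdjoinRoot.lift (algebraMap (ZMod 2) (R2 n)) (xR n ^ d) (by
    simp only [eval₂_sub, eval₂_X_pow, eval₂_one]
    rw [← pow_mul, mul_comm d n, pow_mul, xR_pow_n, one_pow, sub_self])

/-- The Euclidean inner product on `𝔽₂²ⁿ`, in terms of pairs `(u₁, u₂)` of elements of
`𝔽₂[x]/(xⁿ − 1)` (representing the concatenated binary vector `(u₁ | u₂)`). -/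
def eucInner (n : ℕ) (p q : R2 n × R2 n) : ZMod 2 :=
  ∑ i ∈ Finset.range n,
    ((repP p.1).coeff i * (repP q.1).coeff i + (repP p.2).coeff i * (repP q.2).coeff i)

/-- The symplectic inner product of `u₁ + w·u₂` and `v₁ + w·v₂`, i.e.
`Σᵢ (u₁ᵢ·v₂ᵢ + u₂ᵢ·v₁ᵢ)`, in terms of the pairs `(u₁,u₂)`, `(v₁,v₂)`. -/
def sympInner (n : ℕ) (p q : R2 n × R2 n) : ZMod 2 :=
  ∑ i ∈ Finset.range n,
    ((repP p.1).coeff i * (repP q.2).coeff i + (repP p.2).coeff i * (repP q.1).coeff i)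

/-- Euclidean dual of a set of (pairs representing) binary vectors of length `2n`. -/
def eucDual (n : ℕ) (S : Set (R2 n × R2 n)) : Set (R2 n × R2 n) :=
  {p | ∀ q ∈ S, eucInner n q p = 0}

/-- Symplectic dual of a set of (pairs representing) vectors of `𝔽₄ⁿ`. -/
def sympDual (n : ℕ) (S : Set (R2 n × R2 n)) : Set (R2 n × R2 n) :=
  {p | ∀ q ∈ S, sympInner n q p = 0}

/-- Number of nonzero `𝔽₄`-coordinates of `u₁ + w·u₂`, in terms of the pair `(u₁,u₂)`. -/
def wt4 (n : ℕ) (p : R2 n × R2 n) : ℕ := ((repP p.1).support ∪ (repP p.2).support).card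

/-- The `2n` binary coordinates of a pair `(u₁,u₂)`. -/
def coords {n : ℕ} (p : R2 n × R2 n) : (Fin n ⊕ Fin n) → ZMod 2 :=
  Sum.elim (fun i => (repP p.1).coeff i) (fun i => (repP p.2).coeff i)

/-- Vertex set of the Tanner graph: check vertices `x_t` (left) and data vertices
`q_s`, `q'_s` (right). -/
def TV (n : ℕ) : Type := (ZMod n) ⊕ ((ZMod n) ⊕ (ZMod n))

/-- `trel a b v w` holds iff `v` is a check vertex `x_t`, `w` is a data vertex, and they are
connected: `x_t ~ q_s` iff `a_{s−t} = 1`, and `x_t ~ q'_s` iff `b_{s−t} = 1`. -/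
def trel {n : ℕ} (a b : R2 n) (v w : TV n) : Prop :=
  ∃ t s : ZMod n, v = Sum.inl t ∧
    ((w = Sum.inr (Sum.inl s) ∧ coeffZ a (s - t) = 1) ∨
     (w = Sum.inr (Sum.inr s) ∧ coeffZ b (s - t) = 1))

/-- The Tanner graph `T(a,b)` of the GB code of `(a,b)`. -/
def tanner (n : ℕ) (a b : R2 n) : SimpleGraph (TV n) where
  Adj v w := trel a b v w ∨ trel a b w v
  symm := ⟨fun v w h => Or.symm h⟩
  loopless := by
    constructor
    rintro v (⟨t, s, hv, hw⟩ | ⟨t, s, hv, hw⟩) <;>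
      rcases hw with ⟨hw, -⟩ | ⟨hw, -⟩ <;> (subst hv; simp at hw)

end

/-!
When `b = p·a`, a pair `(u, v)` lies in `C₁(a, b)` iff `v + p·u` annihilates `a`, while every pair
in `C₂(a, b)` has first component divisible by `a`. For `a = f` the three pairs have
`v + p·u = 2p`, `2` and `h`, all of which annihilate `f`; and `f` divides neither the units `1` and
`p⁻¹`, since it is a nonunit divisor of `xⁿ − 1`, nor, by hypothesis, `s`.
-/

noncomputable section

lemma isUnit_of_dvd_of_isUnit_mk {A : Type*} [CommRing A] {f g : A[X]} (hfg : f ∣ g)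
    (hf : IsUnit (AdjoinRoot.mk g f)) : IsUnit f := by
  obtain ⟨y, hy⟩ := isUnit_iff_exists_inv.mp hf
  obtain ⟨t, rfl⟩ := AdjoinRoot.mk_surjective y
  have hg : g ∣ f * t - 1 := by
    rwa [← AdjoinRoot.mk_eq_mk, map_mul, map_one]
  exact isUnit_of_dvd_one ((dvd_sub_right (dvd_mul_right f t)).mp (hfg.trans hg))

section Weight

variable {n : ℕ}

lemma repP_mkR (hn : 0 < n) (f : (ZMod 2)[X]) : repP (mkR n f) = f %ₘ (X ^ n - 1) := by
  rw [repP, dif_neg hn.ne', mkR, AdjoinRoot.modByMonicHom_mk]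

lemma wt_mkR_of_degree_lt {f : (ZMod 2)[X]} (hn : 0 < n) (hf : f.degree < n) :
    wt (mkR n f) = f.support.card := by
  have hmonic : (X ^ n - 1 : (ZMod 2)[X]).Monic := monic_X_pow_sub_C 1 hn.ne'
  have hdegree : (X ^ n - 1 : (ZMod 2)[X]).degree = n := degree_X_pow_sub_C hn 1
  rw [wt, repP_mkR hn, (modByMonic_eq_self_iff hmonic).mpr (hdegree ▸ hf)]

lemma wt_one (hn : 0 < n) : wt (1 : R2 n) = 1 := by
  have hdegree : (1 : (ZMod 2)[X]).degree < n := by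
    rw [degree_one]
    exact_mod_cast hn
  rw [← map_one (mkR n), wt_mkR_of_degree_lt hn hdegree, ← C_1, support_C one_ne_zero,
    Finset.card_singleton]

end Weight

section Code

variable {n : ℕ} {a b p u v : R2 n}

lemma mem_C1set_mul_iff : (u, v) ∈ C1set n a (p * a) ↔ (v + p * u) * a = 0 := by
  have hsum : u * (p * a) + v * a = (v + p * u) * a := by ring
  rw [← hsum]
  rfl

lemma dvd_fst_of_mem_C2set (huv : (u, v) ∈ C2set n a b) : a ∣ u := by
  obtain ⟨t, ht⟩ := huv
  exact Dvd.intro_left t (congrArg Prod.fst ht).symm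

lemma mem_C1set_diff_C2set_of_not_dvd (huv : (v + p * u) * a = 0) (hu : ¬a ∣ u) :
    (u, v) ∈ C1set n a (p * a) \ C2set n a (p * a) :=
  ⟨mem_C1set_mul_iff.mpr huv, fun hmem ↦ hu (dvd_fst_of_mem_C2set hmem)⟩

lemma prodMk_mul_mem_C1set_diff_C2set (ha : ¬IsUnit a) (hu : IsUnit u) :
    (u, p * u) ∈ C1set n a (p * a) \ C2set n a (p * a) := by
  refine mem_C1set_diff_C2set_of_not_dvd ?_ fun hdvd ↦ ha (isUnit_of_dvd_unit hdvd hu)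
  rw [ZModModule.add_self, zero_mul]

lemma dGB_le_of_mem (huv : (u, v) ∈ C1set n a b \ C2set n a b) : dGB n a b ≤ wt u + wt v :=
  Nat.sInf_le ⟨(u, v), huv, rfl⟩

end Code

/-- Upper bound on the minimum distance of the GB code of `(f, p·f)`,
where `f ∣ xⁿ−1` with `deg f ≥ 1`, `gcd(p, xⁿ−1) = 1` with inverse `pinv` in `R`,
`h = (xⁿ−1)/f`, and `r + p·s ≡ h (mod xⁿ−1)` with `s` not of the form `t·f` in `R`:
`(1, p)`, `(p⁻¹, 1)` and `(s, r)` all lie in `C₁ \ C₂`, with weights `wt(p)+1`,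
`wt(p⁻¹)+1` and `wt(s)+wt(r)` respectively; consequently
`d_GB ≤ min{wt(p)+1, wt(p⁻¹)+1, wt(s)+wt(r)}`. -/
theorem stmt_5 (n : ℕ) (hn : 0 < n) (f p h : (ZMod 2)[X])
    (hf : f ∣ (X ^ n - 1 : (ZMod 2)[X])) (hdeg : 1 ≤ f.natDegree)
    (hp : EuclideanDomain.gcd p (X ^ n - 1 : (ZMod 2)[X]) = 1)
    (pinv : R2 n) (hpinv : mkR n p * pinv = 1)
    (hh : f * h = X ^ n - 1)
    (r s : (ZMod 2)[X])
    (hrs : mkR n r + mkR n p * mkR n s = mkR n h)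
    (hs : ∀ t : R2 n, mkR n s ≠ t * mkR n f)
    (a b : R2 n) (ha : a = mkR n f) (hb : b = mkR n (p * f)) :
    (((1 : R2 n), mkR n p) ∈ C1set n a b \ C2set n a b ∧
      wt (1 : R2 n) + wt (mkR n p) = wt (mkR n p) + 1) ∧
    ((pinv, (1 : R2 n)) ∈ C1set n a b \ C2set n a b ∧
      wt pinv + wt (1 : R2 n) = wt pinv + 1) ∧
    (mkR n s, mkR n r) ∈ C1set n a b \ C2set n a b ∧
    dGB n a b ≤ min (wt (mkR n p) + 1) (min (wt pinv + 1) (wt (mkR n s) + wt (mkR n r))) := by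
  obtain rfl : b = mkR n p * a := by rw [hb, ha, map_mul]
  have ha_unit : ¬IsUnit a := fun hunit ↦ Nat.one_le_iff_ne_zero.mp hdeg
    (natDegree_eq_zero_of_isUnit (isUnit_of_dvd_of_isUnit_mk hf (ha ▸ hunit)))
  have hha : mkR n h * a = 0 := by
    rw [ha, ← map_mul, mul_comm, hh]
    exact AdjoinRoot.mk_self
  have h1p : (1, mkR n p) ∈ C1set n a (mkR n p * a) \ C2set n a (mkR n p * a) := by
    simpa only [mul_one] using prodMk_mul_mem_C1set_diff_C2set ha_unit isUnit_one
  have hp1 : (pinv, 1) ∈ C1set n a (mkR n p * a) \ C2set n a (mkR n p * a) :=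
    hpinv ▸ prodMk_mul_mem_C1set_diff_C2set ha_unit (IsUnit.of_mul_eq_one_right _ hpinv)
  have hsr : (mkR n s, mkR n r) ∈ C1set n a (mkR n p * a) \ C2set n a (mkR n p * a) :=
    mem_C1set_diff_C2set_of_not_dvd (hrs ▸ hha) fun ⟨t, ht⟩ ↦
      hs t (by rw [ht, ha, mul_comm])
  have hw1 : wt (1 : R2 n) + wt (mkR n p) = wt (mkR n p) + 1 := by rw [wt_one hn, add_comm]
  have hw2 : wt pinv + wt (1 : R2 n) = wt pinv + 1 := by rw [wt_one hn]
  exact ⟨⟨h1p, hw1⟩, ⟨hp1, hw2⟩, hsr, le_min (hw1 ▸ dGB_le_of_mem h1p)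
    (le_min (hw2 ▸ dGB_le_of_mem hp1) (dGB_le_of_mem hsr))⟩

end
end

section
/- Let d ≥ 3 be an odd integer, n = (d²+1)/2, and in R = 𝔽₂[x]/(xⁿ−1) set a = 1 + x and b = (1+x)·P_d(x) (so that b = 1 + x^d and wt(a) + wt(b) = 4, i.e., every stabilizer generator has weight 4). Then dim_{𝔽₂} C₁(a,b) − dim_{𝔽₂} C₂(a,b) = 2 and d_GB(a,b) = d; that is, the GB code of (a,b) is a [[d²+1, 2, d]] quantum code, and for d ≥ 5 it is degenerate since its stabilizer generators have weight 4 < d. -/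
open Polynomial

noncomputable section

/-! Modulo `xⁿ − 1`, the annihilator of `1 + x` is spanned by the all-ones vector `Pₙ`, and `1 + x`
divides `u` exactly when the augmentation `u(1)` vanishes. So `(u, v) ∈ C₁` means
`u · P_d + v = c · Pₙ` for some `c ∈ 𝔽₂`, and such a pair is in `C₂` exactly when `u(1) = c = 0`.
As `a` divides `b`, rank-nullity gives `dim C₁ − dim C₂ = 2 · dim Ann(a) = 2`.

If `(g, f)` satisfies the same equation with constant `c'`, then
`u · f + v · g = (c' · u(1) + c · g(1)) · Pₙ`. When the scalar is `1`, comparing weights gives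
`n ≤ wt u · wt f + wt v · wt g`. Write `d = 2e + 1`, so that `n = e² + (e + 1)²`,
`d(e + 1) = n + e` and `n = de + (e + 1)`. Since `P_d(x) · P_k(x^d) = P_{dk}(x)`, the choices
`k = e + 1` and `k = e` complete `g = P_k(x^d)` to pairs `(g, f)` with `c' = 1` and weights at most
`(e + 1, e)` and `(e, e + 1)`. As `g(1) = k` and the two `k` have opposite parities, every `(u, v)`
outside `C₂` pairs to `1` with one of them, so `wt u + wt v ≤ 2e` would give `n ≤ 2e(e + 1) < n`.
The pair with `k = e + 1` attains weight `d`. -/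

section Augmentation

variable {n : ℕ}

lemma monic_X_pow_sub_one [NeZero n] : (X ^ n - 1 : (ZMod 2)[X]).Monic := by
  simpa using monic_X_pow_sub_C (1 : ZMod 2) (NeZero.ne n)

instance [NeZero n] : Module.Finite (ZMod 2) (R2 n) :=
  monic_X_pow_sub_one.finite_adjoinRoot

lemma mkR_X : mkR n X = xR n := AdjoinRoot.mk_X

lemma mkR_surjective : Function.Surjective (mkR n) := AdjoinRoot.mk_surjective

/-- The augmentation `𝔽₂[x]/(xⁿ − 1) → 𝔽₂`, i.e. evaluation at `x = 1`, which is the sum of the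
coefficients. -/
def aug (n : ℕ) : R2 n →ₐ[ZMod 2] ZMod 2 :=
  AdjoinRoot.liftAlgHom _ (Algebra.ofId _ _) 1 (by simp)

lemma aug_mkR (p : (ZMod 2)[X]) : aug n (mkR n p) = p.eval 1 := by
  simp [aug, mkR, eval₂_eq_eval_map]

@[simp]
lemma aug_xR : aug n (xR n) = 1 := by
  rw [← mkR_X, aug_mkR, eval_X]

instance : CharP (R2 n) 2 :=
  have := (aug n).toRingHom.domain_nontrivial
  charP_of_injective_algebraMap (algebraMap (ZMod 2) (R2 n)).injective 2

lemma mkR_X_sub_one : mkR n (X - 1) = 1 + xR n := by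
  rw [map_sub, mkR_X, map_one, CharTwo.sub_eq_add, add_comm]

lemma one_add_xR_dvd_iff {u : R2 n} : 1 + xR n ∣ u ↔ aug n u = 0 := by
  constructor
  · rintro ⟨r, rfl⟩
    simp [CharTwo.add_self_eq_zero]
  · obtain ⟨p, rfl⟩ := mkR_surjective u
    intro h
    rw [aug_mkR] at h
    rw [← mkR_X_sub_one]
    exact map_dvd _ (by simpa using dvd_iff_isRoot.mpr h)

end Augmentation

section AllOnes

variable {n : ℕ}

lemma mkR_PmP (m : ℕ) : mkR n (PmP m) = PmR n m := by
  simp [PmP, PmR, mkR_X]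

@[simp]
lemma aug_PmR (m : ℕ) : aug n (PmR n m) = m := by
  simp [PmR]

lemma PmR_add (k m : ℕ) : PmR n (k + m) = PmR n k + xR n ^ k * PmR n m := by
  simp only [PmR, Finset.sum_range_add, pow_add, Finset.mul_sum]

lemma PmR_self_add (m : ℕ) : PmR n (n + m) = PmR n n + PmR n m := by
  rw [PmR_add, xR_pow_n, one_mul]

lemma one_add_xR_mul_PmR (m : ℕ) : (1 + xR n) * PmR n m = 1 + xR n ^ m := by
  have h : (xR n - 1) * PmR n m = xR n ^ m - 1 := mul_geom_sum _ _
  linear_combination h + (PmR n m - 1) * CharTwo.two_eq_zero (R := R2 n)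

lemma one_add_xR_mul_PmR_self : (1 + xR n) * PmR n n = 0 := by
  rw [one_add_xR_mul_PmR, xR_pow_n, CharTwo.add_self_eq_zero]

lemma mul_PmR_self (u : R2 n) : u * PmR n n = aug n u • PmR n n := by
  have hdvd : 1 + xR n ∣ u - algebraMap _ _ (aug n u) := by
    rw [one_add_xR_dvd_iff, map_sub, AlgHom.commutes, Algebra.algebraMap_self_apply, sub_self]
  obtain ⟨r, hr⟩ := hdvd
  rw [Algebra.smul_def]
  linear_combination PmR n n * hr + r * one_add_xR_mul_PmR_self

lemma one_add_xR_mul_eq_zero_iff {w : R2 n} :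
    (1 + xR n) * w = 0 ↔ ∃ c : ZMod 2, w = c • PmR n n := by
  constructor
  · intro h
    obtain ⟨p, rfl⟩ := mkR_surjective w
    rw [← mkR_X_sub_one, ← map_mul, mkR, AdjoinRoot.mk_eq_zero, ← mul_geom_sum] at h
    obtain ⟨q, rfl⟩ := (mul_dvd_mul_iff_left (X_sub_C_ne_zero (1 : ZMod 2))).mp h
    refine ⟨aug n (mkR n q), ?_⟩
    rw [← mul_PmR_self, ← mkR_PmP, ← map_mul, mul_comm, PmP]
  · rintro ⟨c, rfl⟩
    rw [mul_smul_comm, one_add_xR_mul_PmR_self, smul_zero]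

end AllOnes

section Substitution

variable {n : ℕ} (d k : ℕ)

@[simp]
lemma substHom_xR : substHom n d (xR n) = xR n ^ d := AdjoinRoot.lift_root _

lemma substHom_PmR : substHom n d (PmR n k) = ∑ j ∈ Finset.range k, xR n ^ (d * j) := by
  simp [PmR, pow_mul]

@[simp]
lemma aug_substHom_PmR : aug n (substHom n d (PmR n k)) = k := by
  simp [substHom_PmR]

lemma PmR_mul_substHom_PmR : PmR n d * substHom n d (PmR n k) = PmR n (d * k) := by
  induction k with
  | zero => simp [PmR]
  | succ k ih =>
    rw [PmR_add k 1, map_add, mul_add, ih, mul_add_one, PmR_add (d * k)]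
    simp [PmR, pow_mul, mul_comm]

end Substitution

section Weight

variable {n : ℕ}

@[simp]
lemma wt_zero : wt (0 : R2 n) = 0 := by
  unfold wt repP
  split_ifs <;> simp

lemma wt_add_le (u v : R2 n) : wt (u + v) ≤ wt u + wt v := by
  have repP_add : repP (u + v) = repP u + repP v := by
    unfold repP
    split_ifs <;> simp
  rw [wt, repP_add]
  exact (Finset.card_le_card support_add).trans (Finset.card_union_le _ _)

variable [NeZero n]

lemma mkR_repP (u : R2 n) : mkR n (repP u) = u := by
  rw [repP, dif_neg (NeZero.ne n)]
  exact AdjoinRoot.mk_leftInverse _ u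

lemma repP_mkR_s7 {p : (ZMod 2)[X]} (hp : p.degree < n) : repP (mkR n p) = p := by
  have hdegree : (X ^ n - 1 : (ZMod 2)[X]).degree = n := by
    simpa using degree_X_pow_sub_C (NeZero.pos n) (1 : ZMod 2)
  rw [repP, dif_neg (NeZero.ne n), mkR, AdjoinRoot.modByMonicHom_mk,
    modByMonic_eq_self_iff monic_X_pow_sub_one, hdegree]
  exact hp

lemma wt_sum_xR_pow {s : Finset ℕ} (hs : ∀ i ∈ s, i < n) : wt (∑ i ∈ s, xR n ^ i) = s.card := by
  have hsupport : (∑ i ∈ s, X ^ i : (ZMod 2)[X]).support = s := by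
    ext i
    simp [coeff_X_pow]
  have hdegree : (∑ i ∈ s, X ^ i : (ZMod 2)[X]).degree < n := by
    refine (degree_sum_le _ _).trans_lt ((Finset.sup_lt_iff (WithBot.bot_lt_coe n)).mpr ?_)
    exact fun i hi => (degree_X_pow_le i).trans_lt (Nat.cast_lt.mpr (hs i hi))
  have hmk : ∑ i ∈ s, xR n ^ i = mkR n (∑ i ∈ s, X ^ i) := by
    simp [mkR_X]
  rw [hmk, wt, repP_mkR_s7 hdegree, hsupport]

lemma wt_PmR_self : wt (PmR n n) = n := by
  rw [PmR, wt_sum_xR_pow (by simp), Finset.card_range]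

lemma PmR_self_ne_zero : PmR n n ≠ 0 := fun h =>
  NeZero.ne n (by rw [← wt_PmR_self (n := n), h, wt_zero])

lemma wt_one_add_xR_pow {k : ℕ} (hk : k ≠ 0) (hkn : k < n) : wt (1 + xR n ^ k) = 2 := by
  have h := wt_sum_xR_pow (n := n) (s := {0, k}) (by simp [NeZero.pos n, hkn])
  rwa [Finset.sum_pair hk.symm, Finset.card_pair hk.symm, pow_zero] at h

lemma wt_xR_pow (k : ℕ) : wt (xR n ^ k) = 1 := by
  rw [pow_eq_pow_mod k (xR_pow_n n)]
  simpa using wt_sum_xR_pow (n := n) (s := {k % n}) (by simp [Nat.mod_lt, NeZero.pos n])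

lemma wt_sum_xR_pow_le {ι : Type*} (s : Finset ι) (f : ι → ℕ) :
    wt (∑ i ∈ s, xR n ^ f i) ≤ s.card := by
  simpa [wt_xR_pow] using
    Finset.le_sum_of_subadditive wt wt_zero.le wt_add_le s fun i => xR n ^ f i

lemma sum_support_repP_xR_pow (u : R2 n) : ∑ i ∈ (repP u).support, xR n ^ i = u := by
  have eq_one_of_ne_zero : ∀ c : ZMod 2, c ≠ 0 → c = 1 := by decide
  have hcoeff : ∀ i ∈ (repP u).support, (repP u).coeff i = 1 := fun i hi =>
    eq_one_of_ne_zero _ (mem_support_iff.mp hi)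
  conv_rhs => rw [← mkR_repP u, (repP u).as_sum_support_C_mul_X_pow, map_sum]
  exact Finset.sum_congr rfl fun i hi => by rw [hcoeff i hi, map_one, one_mul, map_pow, mkR_X]

lemma wt_mul_le (u v : R2 n) : wt (u * v) ≤ wt u * wt v := by
  conv_lhs => rw [← sum_support_repP_xR_pow u, ← sum_support_repP_xR_pow v]
  simp only [Finset.sum_mul_sum, ← pow_add, ← Finset.sum_product']
  exact (wt_sum_xR_pow_le _ _).trans (Finset.card_product _ _).le

lemma wt_xR_pow_mul_le (k : ℕ) (u : R2 n) : wt (xR n ^ k * u) ≤ wt u := by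
  simpa [wt_xR_pow] using wt_mul_le (xR n ^ k) u

lemma wt_PmR_le (m : ℕ) : wt (PmR n m) ≤ m := by
  simpa [PmR] using wt_sum_xR_pow_le (n := n) (Finset.range m) id

lemma wt_substHom_PmR_le (d k : ℕ) : wt (substHom n d (PmR n k)) ≤ k := by
  rw [substHom_PmR]
  simpa using wt_sum_xR_pow_le (n := n) (Finset.range k) (d * ·)

end Weight

section Dimension

open LinearMap Module

variable {n : ℕ}

lemma finrank_ker_coprod_comp {K V W U : Type*} [Field K] [AddCommGroup V] [Module K V]
    [FiniteDimensional K V] [AddCommGroup W] [Module K W] [AddCommGroup U] [Module K U]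
    (f : V →ₗ[K] W) (g : V →ₗ[K] V) (h : W →ₗ[K] U) :
    finrank K (ker ((f ∘ₗ g).coprod f)) =
      finrank K (range (f.prod (h ∘ₗ f))) + 2 * finrank K (ker f) := by
  have range_eq : range ((f ∘ₗ g).coprod f) = range f := by
    rw [range_coprod, sup_eq_right.mpr (range_comp_le_range g f)]
  have ker_eq : ker (f.prod (h ∘ₗ f)) = ker f := by
    rw [ker_prod, inf_eq_left.mpr (ker_le_ker_comp f h)]
  have hcoprod := ((f ∘ₗ g).coprod f).finrank_range_add_finrank_ker
  have hprod := (f.prod (h ∘ₗ f)).finrank_range_add_finrank_ker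
  have hf := f.finrank_range_add_finrank_ker
  rw [range_eq, finrank_prod] at hcoprod
  rw [ker_eq] at hprod
  lia

lemma span_C1set (a b : R2 n) :
    Submodule.span (ZMod 2) (C1set n a b) =
      ker ((mulLeft (ZMod 2) b).coprod (mulLeft (ZMod 2) a)) := by
  have h : C1set n a b = ker ((mulLeft (ZMod 2) b).coprod (mulLeft (ZMod 2) a)) := by
    ext ⟨u, v⟩
    simp [C1set, mul_comm]
  rw [h, Submodule.span_eq]

lemma span_C2set (a b : R2 n) :
    Submodule.span (ZMod 2) (C2set n a b) =
      range ((mulLeft (ZMod 2) a).prod (mulLeft (ZMod 2) b)) := by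
  have h : C2set n a b = range ((mulLeft (ZMod 2) a).prod (mulLeft (ZMod 2) b)) := by
    ext ⟨u, v⟩
    simp [C2set, mul_comm, eq_comm]
  rw [h, Submodule.span_eq]

variable [NeZero n]

lemma finrank_span_C1set_of_dvd {a b : R2 n} (hab : a ∣ b) :
    finrank (ZMod 2) (Submodule.span (ZMod 2) (C1set n a b)) =
      finrank (ZMod 2) (Submodule.span (ZMod 2) (C2set n a b)) +
        2 * finrank (ZMod 2) (ker (mulLeft (ZMod 2) a)) := by
  obtain ⟨p, rfl⟩ := hab
  rw [span_C1set, span_C2set, mulLeft_mul, finrank_ker_coprod_comp _ _ (mulLeft (ZMod 2) p),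
    ← mulLeft_mul, ← mulLeft_mul, mul_comm p]

lemma finrank_ker_mulLeft_one_add_xR :
    finrank (ZMod 2) (ker (mulLeft (ZMod 2) (1 + xR n))) = 1 := by
  have h : ker (mulLeft (ZMod 2) (1 + xR n)) = Submodule.span (ZMod 2) {PmR n n} := by
    ext w
    rw [mem_ker, mulLeft_apply, one_add_xR_mul_eq_zero_iff, Submodule.mem_span_singleton]
    simp only [eq_comm]
  rw [h, finrank_span_singleton PmR_self_ne_zero]

end Dimension

section LogicalOperators

variable {n : ℕ} {u v f g p : R2 n} {c c' : ZMod 2}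

lemma mem_C1set_iff :
    (u, v) ∈ C1set n (1 + xR n) ((1 + xR n) * p) ↔ ∃ c : ZMod 2, u * p + v = c • PmR n n := by
  have h : u * ((1 + xR n) * p) + v * (1 + xR n) = (1 + xR n) * (u * p + v) := by ring
  rw [C1set, Set.mem_ofPred_eq, h, one_add_xR_mul_eq_zero_iff]

lemma mem_C2set_iff :
    (u, v) ∈ C2set n (1 + xR n) ((1 + xR n) * p) ↔ aug n u = 0 ∧ u * p + v = 0 := by
  rw [← one_add_xR_dvd_iff, CharTwo.add_eq_zero]
  constructor
  · rintro ⟨r, hr⟩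
    obtain ⟨rfl, rfl⟩ := Prod.mk_inj.mp hr
    exact ⟨dvd_mul_left _ _, mul_assoc _ _ _⟩
  · rintro ⟨⟨r, rfl⟩, rfl⟩
    exact ⟨r, Prod.ext (mul_comm _ _) (by ring)⟩

lemma mem_C1set_diff_C2set_iff [NeZero n] :
    (u, v) ∈ C1set n (1 + xR n) ((1 + xR n) * p) \ C2set n (1 + xR n) ((1 + xR n) * p) ↔
      ∃ c : ZMod 2, u * p + v = c • PmR n n ∧ (aug n u ≠ 0 ∨ c ≠ 0) := by
  rw [Set.mem_sdiff, mem_C1set_iff, mem_C2set_iff, ← exists_and_right]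
  refine exists_congr fun c => and_congr_right fun hc => ?_
  rw [hc, smul_eq_zero_iff_left PmR_self_ne_zero, not_and_or]

lemma mul_add_mul_eq_smul_PmR (huv : u * p + v = c • PmR n n)
    (hgf : g * p + f = c' • PmR n n) :
    u * f + v * g = (c' * aug n u + c * aug n g) • PmR n n := by
  have hu : u * (c' • PmR n n) = (c' * aug n u) • PmR n n := by
    rw [mul_smul_comm, mul_PmR_self, mul_smul]
  have hg : g * (c • PmR n n) = (c * aug n g) • PmR n n := by
    rw [mul_smul_comm, mul_PmR_self, mul_smul]
  rw [add_smul, ← hu, ← hg, ← huv, ← hgf]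
  linear_combination -(u * p * g) * CharTwo.two_eq_zero (R := R2 n)

lemma le_wt_mul_add_wt_mul [NeZero n] (huv : u * p + v = c • PmR n n)
    (hgf : g * p + f = c' • PmR n n) (hpair : c' * aug n u + c * aug n g = 1) :
    n ≤ wt u * wt f + wt v * wt g :=
  calc n = wt (u * f + v * g) := by
        rw [mul_add_mul_eq_smul_PmR huv hgf, hpair, one_smul, wt_PmR_self]
    _ ≤ wt (u * f) + wt (v * g) := wt_add_le _ _
    _ ≤ wt u * wt f + wt v * wt g := add_le_add (wt_mul_le _ _) (wt_mul_le _ _)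

end LogicalOperators

section Distance

variable {n d k m e : ℕ} {u v : R2 n} {c : ZMod 2}

lemma exists_substHom_PmR_mul_PmR_add_eq [NeZero n] (h : d * k = n + m ∨ n = d * k + m) :
    ∃ f : R2 n, substHom n d (PmR n k) * PmR n d + f = PmR n n ∧ wt f ≤ m := by
  rw [mul_comm, PmR_mul_substHom_PmR]
  rcases h with h | h
  · refine ⟨PmR n m, ?_, wt_PmR_le m⟩
    rw [h, PmR_self_add, CharTwo.add_cancel_right]
  · refine ⟨xR n ^ (d * k) * PmR n m, ?_, (wt_xR_pow_mul_le _ _).trans (wt_PmR_le m)⟩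
    rw [← PmR_add, ← h]

lemma le_wt_mul_add_wt_mul_of_aug_add_mul_eq_one [NeZero n]
    (h : d * k = n + m ∨ n = d * k + m) (huv : u * PmR n d + v = c • PmR n n)
    (hpair : aug n u + c * k = 1) :
    n ≤ wt u * m + wt v * k := by
  obtain ⟨f, hf, hfm⟩ := exists_substHom_PmR_mul_PmR_add_eq h
  refine (le_wt_mul_add_wt_mul (c' := 1) huv (by rwa [one_smul])
    (by rwa [one_mul, aug_substHom_PmR])).trans ?_
  gcongr
  exact wt_substHom_PmR_le d k

lemma le_wt_add_wt_of_mem_C1set_diff_C2set (hn : n = e ^ 2 + (e + 1) ^ 2) {q : R2 n × R2 n}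
    (hq : q ∈ C1set n (1 + xR n) ((1 + xR n) * PmR n (2 * e + 1)) \
      C2set n (1 + xR n) ((1 + xR n) * PmR n (2 * e + 1))) :
    2 * e + 1 ≤ wt q.1 + wt q.2 := by
  have : NeZero n := ⟨by lia⟩
  obtain ⟨c, huv, hne⟩ := mem_C1set_diff_C2set_iff.mp hq
  have hpair : aug n q.1 + c * (e + 1 : ℕ) = 1 ∨ aug n q.1 + c * e = 1 := by
    have key : ∀ s c t : ZMod 2, s ≠ 0 ∨ c ≠ 0 → s + c * (t + 1) = 1 ∨ s + c * t = 1 := by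
      decide
    exact_mod_cast key _ c e hne
  have hn_le : n ≤ wt q.1 * e + wt q.2 * (e + 1) ∨ n ≤ wt q.1 * (e + 1) + wt q.2 * e :=
    hpair.imp (le_wt_mul_add_wt_mul_of_aug_add_mul_eq_one (.inl (by lia)) huv)
      (le_wt_mul_add_wt_mul_of_aug_add_mul_eq_one (.inr (by lia)) huv)
  by_contra! hlt
  rcases hn_le with h | h <;> nlinarith

lemma exists_mem_C1set_diff_C2set_wt_add_wt_le (hn : n = e ^ 2 + (e + 1) ^ 2) :
    ∃ q ∈ C1set n (1 + xR n) ((1 + xR n) * PmR n (2 * e + 1)) \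
      C2set n (1 + xR n) ((1 + xR n) * PmR n (2 * e + 1)), wt q.1 + wt q.2 ≤ 2 * e + 1 := by
  have : NeZero n := ⟨by lia⟩
  obtain ⟨f, hf, hfe⟩ := exists_substHom_PmR_mul_PmR_add_eq (n := n) (d := 2 * e + 1) (k := e + 1)
    (m := e) (.inl (by lia))
  refine ⟨(_, f), mem_C1set_diff_C2set_iff.mpr ⟨1, by rwa [one_smul], .inr one_ne_zero⟩, ?_⟩
  have := wt_substHom_PmR_le (n := n) (2 * e + 1) (e + 1)
  lia

lemma dGB_one_add_xR (hn : n = e ^ 2 + (e + 1) ^ 2) :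
    dGB n (1 + xR n) ((1 + xR n) * PmR n (2 * e + 1)) = 2 * e + 1 := by
  obtain ⟨q, hq, hle⟩ := exists_mem_C1set_diff_C2set_wt_add_wt_le hn
  rw [dGB]
  refine IsLeast.csInf_eq ⟨⟨q, hq, hle.antisymm (le_wt_add_wt_of_mem_C1set_diff_C2set hn hq)⟩, ?_⟩
  rintro _ ⟨q', hq', rfl⟩
  exact le_wt_add_wt_of_mem_C1set_diff_C2set hn hq'

end Distance

/-- For odd `d ≥ 3`, `2n = d² + 1`, `a = 1 + x`, and `b = (1+x)·P_d(x)`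
in `R = 𝔽₂[x]/(xⁿ−1)`: `b = 1 + x^d`, the stabilizer generators have weight
`wt(a) + wt(b) = 4`, `dim C₁(a,b) − dim C₂(a,b) = 2`, and `d_GB(a,b) = d`; i.e. the GB
code of `(a,b)` is a `[[d²+1, 2, d]]` quantum code, which for `d ≥ 5` is degenerate
(it has a nonzero stabilizer of weight `4 < d`). -/
theorem stmt_7 (d n : ℕ) (hd : Odd d) (hd3 : 3 ≤ d) (hn : 2 * n = d ^ 2 + 1)
    (a b : R2 n) (ha : a = 1 + xR n) (hb : b = (1 + xR n) * PmR n d) :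
    b = 1 + xR n ^ d ∧
    wt a + wt b = 4 ∧
    Module.finrank (ZMod 2) ↥(Submodule.span (ZMod 2) (C1set n a b)) -
        Module.finrank (ZMod 2) ↥(Submodule.span (ZMod 2) (C2set n a b)) = 2 ∧
    dGB n a b = d ∧
    (5 ≤ d → ∃ p ∈ C2set n a b, p ≠ 0 ∧ wt p.1 + wt p.2 < dGB n a b) := by
  subst ha hb
  obtain ⟨e, rfl⟩ := hd
  have hn_sq : n = e ^ 2 + (e + 1) ^ 2 := by lia
  have hdn : 2 * e + 1 < n := by nlinarith
  have : NeZero n := ⟨by lia⟩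
  have hb := one_add_xR_mul_PmR (n := n) (2 * e + 1)
  have hwt : wt (1 + xR n) + wt ((1 + xR n) * PmR n (2 * e + 1)) = 4 := by
    have hwt_a : wt (1 + xR n) = 2 := by
      simpa only [pow_one] using wt_one_add_xR_pow (n := n) one_ne_zero (by lia)
    rw [hb, hwt_a, wt_one_add_xR_pow (by lia) hdn]
  have hdist := dGB_one_add_xR hn_sq
  refine ⟨hb, hwt, ?_, hdist, fun h5 => ⟨_, ⟨1, by rw [one_mul, one_mul]⟩, ?_, ?_⟩⟩
  · rw [finrank_span_C1set_of_dvd (dvd_mul_right _ _), finrank_ker_mulLeft_one_add_xR,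
      Nat.add_sub_cancel_left]
  · intro h
    simp [(Prod.mk_eq_zero.mp h).1] at hwt
  · rw [hwt, hdist]
    lia

end
end
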